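/- Let F be a finite family of at least three pairwise distinct nonempty compact convex subsets of ℝ² such that no three distinct members of F admit a common transversal line. Suppose that for each A ∈ F a point x_A ∈ A is chosen, that the points x_A are pairwise distinct, and that the point set {x_A : A ∈ F} is in convex position, i.e., for every A ∈ F the point x_A does not lie in the convex hull of {x_B : B ∈ F, B ≠ A}. Then the family F is in convex position. -/

import Mathlib

open Set

noncomputable section

/-- The Euclidean plane. -/
abbrev Plane : Type := EuclideanSpace ℝ (Fin 2)

/-- The 2×2 determinant of two plane vectors. -/
def det2 (u v : Plane) : ℝ := u 0 * v 1 - u 1 * v 0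

/-- A convex body in the plane: nonempty, compact and convex. -/
def ConvexBody2 (A : Set Plane) : Prop := A.Nonempty ∧ IsCompact A ∧ Convex ℝ A

/-- A family of sets is in convex position if removing any member changes the
convex hull of the union of the family. -/
def ConvexPos (F : Set (Set Plane)) : Prop :=
  ∀ A ∈ F, convexHull ℝ (⋃₀ F) ≠ convexHull ℝ (⋃₀ (F \ {A}))

/-- A family is in general position if every 3-element subfamily is in convex position. -/
def GenPos (F : Set (Set Plane)) : Prop :=
  ∀ G ⊆ F, G.ncard = 3 → ConvexPos G

/-- Two sets are noncrossing if both set differences are connected. -/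
def NoncrossingPair (A B : Set Plane) : Prop := IsConnected (A \ B) ∧ IsConnected (B \ A)

/-- Two convex bodies are tangent if they intersect but their interiors are disjoint. -/
def TangentBodies (A B : Set Plane) : Prop :=
  (A ∩ B).Nonempty ∧ interior A ∩ interior B = ∅

/-- The line `{x | f x = c}` (for `f ≠ 0`) is tangent to `A`:
it meets `A` and `A` lies in one of the two closed half-planes it bounds. -/
def TangentLineTo (f : Plane →ₗ[ℝ] ℝ) (c : ℝ) (A : Set Plane) : Prop :=
  (∃ x ∈ A, f x = c) ∧ ((∀ x ∈ A, f x ≤ c) ∨ (∀ x ∈ A, c ≤ f x))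

/-- No line is tangent to three distinct members of the family. -/
def NoTripleTangentLine (F : Set (Set Plane)) : Prop :=
  ∀ f : Plane →ₗ[ℝ] ℝ, f ≠ 0 → ∀ c : ℝ, ∀ A ∈ F, ∀ B ∈ F, ∀ C ∈ F,
    A ≠ B → B ≠ C → A ≠ C →
    ¬ (TangentLineTo f c A ∧ TangentLineTo f c B ∧ TangentLineTo f c C)

/-- The ordered triple `(A₁, A₂, A₃)` is counterclockwise oriented. -/
def CCWOriented (A₁ A₂ A₃ : Set Plane) : Prop :=
  ∃ a₁ ∈ A₁ ∩ frontier (convexHull ℝ (A₁ ∪ A₂ ∪ A₃)),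
  ∃ a₂ ∈ A₂ ∩ frontier (convexHull ℝ (A₁ ∪ A₂ ∪ A₃)),
  ∃ a₃ ∈ A₃ ∩ frontier (convexHull ℝ (A₁ ∪ A₂ ∪ A₃)),
    0 < det2 (a₂ - a₁) (a₃ - a₁)

/-- The ordered triple `(A₁, A₂, A₃)` is clockwise oriented. -/
def CWOriented (A₁ A₂ A₃ : Set Plane) : Prop :=
  ∃ a₁ ∈ A₁ ∩ frontier (convexHull ℝ (A₁ ∪ A₂ ∪ A₃)),
  ∃ a₂ ∈ A₂ ∩ frontier (convexHull ℝ (A₁ ∪ A₂ ∪ A₃)),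
  ∃ a₃ ∈ A₃ ∩ frontier (convexHull ℝ (A₁ ∪ A₂ ∪ A₃)),
    det2 (a₂ - a₁) (a₃ - a₁) < 0

/-- An affine line in the plane: an affine subspace with 1-dimensional direction. -/
def IsLine (L : AffineSubspace ℝ Plane) : Prop := Module.finrank ℝ L.direction = 1

/-- `L` is a transversal line of the family `F`. -/
def TransversalLine (L : AffineSubspace ℝ Plane) (F : Set (Set Plane)) : Prop :=
  IsLine L ∧ ∀ A ∈ F, ((L : Set Plane) ∩ A).Nonempty

/-! Suppose the point `x A` lies in the convex hull of the other members. By Carathéodory it lies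
in a triangle with vertices in members `P 0`, `P 1`, `P 2` different from `A`; these are pairwise
distinct, since otherwise `x A` would lie on a segment joining two members and there would be a
transversal. A point lies in a nondegenerate triangle iff it sees the three edges with the same
orientation. Moving the vertices within the convex sets `P i` never changes these orientations,
again because there is no transversal, so `x A` also lies in the triangle with vertices `x (P i)`.
-/

open Module

section Caratheodory

variable {𝕜 E : Type*} [Field 𝕜] [LinearOrder 𝕜] [IsStrictOrderedRing 𝕜] [AddCommGroup E]
  [Module 𝕜 E]

lemma mem_convexHull_range_iff {ι : Type*} [Fintype ι] {p : ι → E} {x : E} :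
    x ∈ convexHull 𝕜 (range p) ↔
      ∃ w : ι → 𝕜, (∀ i, 0 ≤ w i) ∧ ∑ i, w i = 1 ∧ ∑ i, w i • p i = x := by
  classical
  have hrange : range p =
      Fintype.linearCombination 𝕜 p '' range (fun i : ι ↦ Pi.single i (1 : 𝕜)) := by
    rw [← range_comp]
    congr 1
    ext i
    simp
  rw [hrange, ← LinearMap.image_convexHull, convexHull_rangle_single_eq_stdSimplex]
  simp only [mem_image, stdSimplex, mem_ofPred_eq, Fintype.linearCombination_apply, and_assoc]

lemma exists_fin_mem_convexHull_range [FiniteDimensional 𝕜 E] {s : Set E} {x : E}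
    (hx : x ∈ convexHull 𝕜 s) :
    ∃ p : Fin (finrank 𝕜 E + 1) → E, (∀ i, p i ∈ s) ∧ x ∈ convexHull 𝕜 (range p) := by
  obtain ⟨ι, _, z, w, hzs, hz, hw₀, hw₁, hwz⟩ := eq_pos_convex_span_of_mem_convexHull hx
  have : Nonempty ι := by
    by_contra h
    simp [not_nonempty_iff.mp h] at hw₁
  have hcard : Fintype.card ι ≤ Fintype.card (Fin (finrank 𝕜 E + 1)) := by
    simpa using hz.card_le_finrank_succ.trans
      (Nat.add_le_add_right (Submodule.finrank_le (vectorSpan 𝕜 (range z))) 1)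
  obtain ⟨e⟩ := Function.Embedding.nonempty_of_card_le hcard
  refine ⟨z ∘ Function.invFun e, fun i ↦ hzs (mem_range_self _), ?_⟩
  rw [(Function.invFun_surjective e.injective).range_comp]
  exact mem_convexHull_range_iff.mpr ⟨w, fun i ↦ (hw₀ i).le, hw₁, hwz⟩

lemma exists_fin_three_of_mem_convexHull_sUnion (hE : finrank 𝕜 E = 2) {G : Set (Set E)} {x : E}
    (hx : x ∈ convexHull 𝕜 (⋃₀ G)) (hpair : ∀ B ∈ G, ∀ C ∈ G, x ∉ convexHull 𝕜 (B ∪ C)) :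
    ∃ (P : Fin 3 → Set E) (p : Fin 3 → E), (∀ i, P i ∈ G) ∧ (∀ i, P i ≠ P (i + 1)) ∧
      (∀ i, p i ∈ P i) ∧ x ∈ convexHull 𝕜 (range p) := by
  have : FiniteDimensional 𝕜 E := .of_finrank_pos (by omega)
  obtain ⟨p, hp, hxp⟩ := hE ▸ exists_fin_mem_convexHull_range hx
  choose P hPG hpP using hp
  refine ⟨P, p, hPG, fun i heq ↦ hpair _ (hPG i) _ (hPG (i + 2)) ?_, hpP, hxp⟩
  refine convexHull_mono (range_subset_iff.mpr fun j ↦ ?_) hxp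
  have hcyc : ∀ k l : Fin 3, l = k ∨ l = k + 1 ∨ l = k + 2 := by decide
  rcases hcyc i j with rfl | rfl | rfl
  · exact .inl (hpP _)
  · exact .inl (heq ▸ hpP _)
  · exact .inr (hpP _)

lemma exists_collinear_of_mem_convexHull_union {B C : Set E} (hB : Convex 𝕜 B) (hC : Convex 𝕜 C)
    (hB₀ : B.Nonempty) (hC₀ : C.Nonempty) {x : E} (hx : x ∈ convexHull 𝕜 (B ∪ C)) :
    ∃ b ∈ B, ∃ c ∈ C, Collinear 𝕜 {x, b, c} := by
  rw [hB.convexHull_union hC hB₀ hC₀, mem_convexJoin] at hx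
  obtain ⟨b, hb, c, hc, hxbc⟩ := hx
  refine ⟨b, hb, c, hc, ?_⟩
  rw [insert_comm]
  exact (mem_segment_iff_wbtw.mp hxbc).collinear

end Caratheodory

lemma sign_eq_of_isPreconnected {X α : Type*} [TopologicalSpace X] [Zero α] [LinearOrder α]
    [TopologicalSpace α] [OrderTopology α] {s : Set X} (hs : IsPreconnected s) {f : X → α}
    (hf : ContinuousOn f s) (hf₀ : ∀ a ∈ s, f a ≠ 0) {a b : X} (ha : a ∈ s) (hb : b ∈ s) :
    SignType.sign (f a) = SignType.sign (f b) :=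
  hs.constant (fun c hc ↦ (continuousAt_sign_of_ne_zero (hf₀ c hc)).comp_continuousWithinAt
    (hf c hc)) ha hb

lemma exists_finrank_direction_eq_one_of_collinear {k V P : Type*} [DivisionRing k]
    [AddCommGroup V] [Module k V] [Nontrivial V] [AddTorsor V P] {s : Set P}
    (hs : Collinear k s) :
    ∃ L : AffineSubspace k P, finrank k L.direction = 1 ∧ s ⊆ L := by
  obtain ⟨p₀, v, hv⟩ := (collinear_iff_exists_forall_eq_smul_vadd s).mp hs
  obtain ⟨w, hw, hvw⟩ : ∃ w ≠ 0, v ∈ Submodule.span k {w} := by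
    by_cases hv₀ : v = 0
    · obtain ⟨w, hw⟩ := exists_ne (0 : V)
      exact ⟨w, hw, hv₀ ▸ zero_mem _⟩
    · exact ⟨v, hv₀, Submodule.mem_span_singleton_self v⟩
  refine ⟨AffineSubspace.mk' p₀ (Submodule.span k {w}), ?_, fun p hp ↦ ?_⟩
  · rw [AffineSubspace.direction_mk', finrank_span_singleton hw]
  · obtain ⟨r, rfl⟩ := hv p hp
    simpa using Submodule.smul_mem _ r hvw

lemma exists_transversalLine_of_collinear {A B C : Set Plane} {a b c : Plane} (ha : a ∈ A)
    (hb : b ∈ B) (hc : c ∈ C) (h : Collinear ℝ {a, b, c}) :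
    ∃ L : AffineSubspace ℝ Plane, TransversalLine L {A, B, C} := by
  obtain ⟨L, hL, habc⟩ := exists_finrank_direction_eq_one_of_collinear h
  refine ⟨L, hL, ?_⟩
  rintro _ (rfl | rfl | rfl)
  · exact ⟨a, habc (by simp), ha⟩
  · exact ⟨b, habc (by simp), hb⟩
  · exact ⟨c, habc (by simp), hc⟩

lemma det2_ne_zero_of_linearIndependent {u v : Plane} (h : LinearIndependent ℝ ![u, v]) :
    det2 u v ≠ 0 := by
  intro hdet
  rw [det2] at hdet
  rw [LinearIndependent.pair_iff] at h
  have hcoord (i : Fin 2) : u i = 0 := by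
    refine neg_eq_zero.mp (h (v i) (-u i) ?_).2
    ext j
    fin_cases i <;> fin_cases j <;>
    · simp only [Fin.zero_eta, Fin.mk_one, PiLp.add_apply, PiLp.smul_apply, PiLp.zero_apply,
        smul_eq_mul]
      linarith
  exact one_ne_zero (h 1 0 (by ext i; simp [hcoord])).1

lemma det2_sub_ne_zero_of_not_collinear {a b c : Plane} (h : ¬ Collinear ℝ {a, b, c}) :
    det2 (b - a) (c - a) ≠ 0 := by
  apply det2_ne_zero_of_linearIndependent
  have hind := (affineIndependent_iff_linearIndependent_vsub ℝ _ 0).mp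
    (affineIndependent_iff_not_collinear_set.mpr h)
  convert! hind.comp (fun i : Fin 2 ↦ ⟨i.succ, i.succ_ne_zero⟩) (by intro i j; simp) using 1
  ext i
  fin_cases i <;> simp

/-- Twice the signed area of the triangle `x`, `p i`, `p (i + 1)`: its sign tells on which side of
the `i`-th edge of the triangle `p` the point `x` lies. Indices are taken modulo 3. -/
def edgeDet (p : Fin 3 → Plane) (x : Plane) (i : Fin 3) : ℝ :=
  det2 (p i - x) (p (i + 1) - x)

lemma sum_edgeDet_smul (p : Fin 3 → Plane) (x : Plane) :
    (∑ i, edgeDet p x i) • x = ∑ i, edgeDet p x (i + 1) • p i := by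
  ext j
  fin_cases j <;>
  · simp only [edgeDet, det2, Fin.sum_univ_three, Fin.zero_eta, Fin.mk_one, Fin.isValue,
      Fin.reduceAdd, zero_add, PiLp.add_apply, PiLp.sub_apply, PiLp.smul_apply, smul_eq_mul]
    ring

lemma edgeDet_sum_smul (p : Fin 3 → Plane) {w : Fin 3 → ℝ} (hw : ∑ i, w i = 1) (i : Fin 3) :
    edgeDet p (∑ j, w j • p j) (i + 1) = w i * ∑ j, edgeDet p (∑ j, w j • p j) j := by
  rw [Fin.sum_univ_three] at hw
  have hw₂ : w 2 = 1 - w 0 - w 1 := by linarith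
  fin_cases i <;>
  · simp only [edgeDet, det2, Fin.sum_univ_three, hw₂, Fin.zero_eta, Fin.mk_one, Fin.reduceFinMk,
      Fin.isValue, Fin.reduceAdd, zero_add, PiLp.add_apply, PiLp.sub_apply, PiLp.smul_apply,
      smul_eq_mul]
    ring

lemma mem_convexHull_range_iff_edgeDet {p : Fin 3 → Plane} {x : Plane}
    (hne : ∀ i, edgeDet p x i ≠ 0) :
    x ∈ convexHull ℝ (range p) ↔ (∀ i, 0 < edgeDet p x i) ∨ ∀ i, edgeDet p x i < 0 := by
  constructor
  · intro hx
    obtain ⟨w, hw₀, hw₁, rfl⟩ := mem_convexHull_range_iff.mp hx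
    have hdet (i : Fin 3) := edgeDet_sum_smul p hw₁ (i - 1)
    simp only [sub_add_cancel] at hdet
    rcases le_total 0 (∑ j, edgeDet p (∑ j, w j • p j) j) with hsum | hsum
    · exact .inl fun i ↦ (hne i).symm.lt_of_le (hdet i ▸ mul_nonneg (hw₀ _) hsum)
    · exact .inr fun i ↦ (hne i).lt_of_le
        (hdet i ▸ mul_nonpos_of_nonneg_of_nonpos (hw₀ _) hsum)
  · intro hsign
    set D := ∑ i, edgeDet p x i
    obtain ⟨hD₀, hw₀⟩ : D ≠ 0 ∧ ∀ i, 0 ≤ edgeDet p x (i + 1) / D := by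
      rcases hsign with hpos | hneg
      · have hDpos : 0 < D := Finset.sum_pos (fun i _ ↦ hpos i) Finset.univ_nonempty
        exact ⟨hDpos.ne', fun i ↦ (div_pos (hpos _) hDpos).le⟩
      · have hDneg : D < 0 := Finset.sum_neg (fun i _ ↦ hneg i) Finset.univ_nonempty
        exact ⟨hDneg.ne, fun i ↦ (div_pos_of_neg_of_neg (hneg _) hDneg).le⟩
    refine mem_convexHull_range_iff.mpr ⟨fun i ↦ edgeDet p x (i + 1) / D, hw₀, ?_, ?_⟩
    · have hshift : ∑ i, edgeDet p x (i + 1) = D :=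
        Equiv.sum_comp (Equiv.addRight 1) (edgeDet p x)
      rw [← Finset.sum_div, hshift, div_self hD₀]
    · simp_rw [div_eq_inv_mul, mul_smul, ← Finset.smul_sum, ← sum_edgeDet_smul]
      rw [inv_smul_smul₀ hD₀]

lemma sign_det2_sub_eq {P Q : Set Plane} (hP : IsPreconnected P) (hQ : IsPreconnected Q)
    {x : Plane} (hne : ∀ p ∈ P, ∀ q ∈ Q, det2 (p - x) (q - x) ≠ 0) {p p' q q' : Plane} (hp : p ∈ P)
    (hp' : p' ∈ P) (hq : q ∈ Q) (hq' : q' ∈ Q) :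
    SignType.sign (det2 (p - x) (q - x)) = SignType.sign (det2 (p' - x) (q' - x)) := by
  have hcont : Continuous fun y : Plane × Plane ↦ det2 (y.1 - x) (y.2 - x) := by
    simp only [det2, PiLp.sub_apply]
    fun_prop
  exact sign_eq_of_isPreconnected (hP.prod hQ) hcont.continuousOn
    (fun y hy ↦ hne y.1 hy.1 y.2 hy.2) (mk_mem_prod hp hq) (mk_mem_prod hp' hq')

lemma mem_convexHull_range_of_not_collinear {P : Fin 3 → Set Plane}
    (hP : ∀ i, IsPreconnected (P i)) {x : Plane}
    (hcol : ∀ i, ∀ a ∈ P i, ∀ b ∈ P (i + 1), ¬ Collinear ℝ {x, a, b})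
    {p q : Fin 3 → Plane} (hp : ∀ i, p i ∈ P i) (hq : ∀ i, q i ∈ P i)
    (hx : x ∈ convexHull ℝ (range p)) : x ∈ convexHull ℝ (range q) := by
  have hdet (i : Fin 3) : ∀ a ∈ P i, ∀ b ∈ P (i + 1), det2 (a - x) (b - x) ≠ 0 :=
    fun a ha b hb ↦ det2_sub_ne_zero_of_not_collinear (hcol i a ha b hb)
  have hsign (i : Fin 3) : SignType.sign (edgeDet p x i) = SignType.sign (edgeDet q x i) :=
    sign_det2_sub_eq (hP i) (hP (i + 1)) (hdet i) (hp i) (hq i) (hp _) (hq _)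
  rw [mem_convexHull_range_iff_edgeDet fun i ↦ hdet i _ (hp i) _ (hp _)] at hx
  rw [mem_convexHull_range_iff_edgeDet fun i ↦ hdet i _ (hq i) _ (hq _)]
  simpa only [← sign_eq_one_iff, ← sign_eq_neg_one_iff, hsign] using hx

/-- No line meets three distinct members of `F`; the line is replaced by collinearity of points
chosen in the members. -/
def NoCollinearTriple (F : Set (Set Plane)) : Prop :=
  ∀ A ∈ F, ∀ B ∈ F, ∀ C ∈ F, A ≠ B → B ≠ C → A ≠ C →
    ∀ a ∈ A, ∀ b ∈ B, ∀ c ∈ C, ¬ Collinear ℝ {a, b, c}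

lemma NoCollinearTriple.disjoint {F : Set (Set Plane)} (hF : NoCollinearTriple F)
    (hne : ∀ A ∈ F, A.Nonempty) (hcard : 3 ≤ F.encard) {A B : Set Plane} (hA : A ∈ F) (hB : B ∈ F)
    (hAB : A ≠ B) : Disjoint A B := by
  rw [disjoint_left]
  intro y hyA hyB
  obtain ⟨C, hC, hCAB⟩ : ∃ C ∈ F, C ∉ ({A, B} : Set (Set Plane)) := by
    by_contra! hsub
    have hcard_le : (3 : ℕ∞) ≤ 2 := encard_pair hAB ▸ hcard.trans (encard_le_encard hsub)
    norm_num at hcard_le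
  obtain ⟨hCA, hCB⟩ : C ≠ A ∧ C ≠ B := by simpa using hCAB
  obtain ⟨c, hc⟩ := hne C hC
  refine hF A hA B hB C hC hAB hCB.symm hCA.symm y hyA y hyB c hc ?_
  simpa using collinear_pair ℝ y c

lemma NoCollinearTriple.notMem_convexHull_union {F : Set (Set Plane)} (hF : NoCollinearTriple F)
    (hne : ∀ A ∈ F, A.Nonempty) (hconv : ∀ A ∈ F, Convex ℝ A) (hcard : 3 ≤ F.encard)
    {A B C : Set Plane} (hA : A ∈ F) (hB : B ∈ F) (hC : C ∈ F) (hAB : A ≠ B) (hAC : A ≠ C)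
    {a : Plane} (ha : a ∈ A) : a ∉ convexHull ℝ (B ∪ C) := by
  intro h
  by_cases hBC : B = C
  · subst hBC
    rw [union_self, (hconv B hB).convexHull_eq] at h
    exact (hF.disjoint hne hcard hA hB hAB).notMem_of_mem_left ha h
  · obtain ⟨b, hb, c, hc, hcol⟩ := exists_collinear_of_mem_convexHull_union (hconv B hB)
      (hconv C hC) (hne B hB) (hne C hC) h
    exact hF A hA B hB C hC hAB hBC hAC a ha b hb c hc hcol

theorem convexPos_of_representative_points_general (F : Set (Set Plane)) (hcard : 3 ≤ F.encard)
    (hconv : ∀ A ∈ F, Convex ℝ A)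
    (hline : ∀ A ∈ F, ∀ B ∈ F, ∀ C ∈ F, A ≠ B → B ≠ C → A ≠ C →
      ¬ ∃ L : AffineSubspace ℝ Plane, TransversalLine L {A, B, C})
    (x : Set Plane → Plane) (hx : ∀ A ∈ F, x A ∈ A)
    (hxconv : ∀ A ∈ F, x A ∉ convexHull ℝ (x '' (F \ {A}))) :
    ConvexPos F := by
  have hF : NoCollinearTriple F := fun A hA B hB C hC hAB hBC hAC a ha b hb c hc hcol ↦
    hline A hA B hB C hC hAB hBC hAC (exists_transversalLine_of_collinear ha hb hc hcol)
  intro A hA hhull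
  have hxA : x A ∈ convexHull ℝ (⋃₀ (F \ {A})) :=
    hhull ▸ subset_convexHull ℝ _ (mem_sUnion_of_mem (hx A hA) hA)
  have hpair : ∀ B ∈ F \ {A}, ∀ C ∈ F \ {A}, x A ∉ convexHull ℝ (B ∪ C) := fun B hB C hC ↦
    hF.notMem_convexHull_union (fun B hB ↦ ⟨x B, hx B hB⟩) hconv hcard hA hB.1 hC.1
      (Ne.symm hB.2) (Ne.symm hC.2) (hx A hA)
  obtain ⟨P, p, hP, hP_ne, hp, hxp⟩ :=
    exists_fin_three_of_mem_convexHull_sUnion finrank_euclideanSpace_fin hxA hpair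
  have hxP : x A ∈ convexHull ℝ (range (x ∘ P)) :=
    mem_convexHull_range_of_not_collinear (fun i ↦ (hconv _ (hP i).1).isPreconnected)
      (fun i ↦ hF A hA _ (hP i).1 _ (hP (i + 1)).1 (Ne.symm (hP i).2) (hP_ne i)
        (Ne.symm (hP (i + 1)).2) _ (hx A hA))
      hp (fun i ↦ hx _ (hP i).1) hxp
  exact hxconv A hA (convexHull_mono (range_subset_iff.mpr fun i ↦ mem_image_of_mem x (hP i)) hxP)

/-- If no three members of a family have a common transversal line, then the
family is in convex position whenever chosen representative points are. -/
theorem convexPos_of_representative_points (F : Set (Set Plane)) (hfin : F.Finite)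
    (hcard : 3 ≤ F.ncard)
    (hbody : ∀ A ∈ F, ConvexBody2 A)
    (hline : ∀ A ∈ F, ∀ B ∈ F, ∀ C ∈ F, A ≠ B → B ≠ C → A ≠ C →
      ¬ ∃ L : AffineSubspace ℝ Plane, TransversalLine L {A, B, C})
    (x : Set Plane → Plane)
    (hx : ∀ A ∈ F, x A ∈ A)
    (hxinj : Set.InjOn x F)
    (hxconv : ∀ A ∈ F, x A ∉ convexHull ℝ (x '' (F \ {A}))) :
    ConvexPos F :=
  convexPos_of_representative_points_general F
    (hfin.cast_ncard_eq ▸ by exact_mod_cast hcard) (fun A hA ↦ (hbody A hA).2.2) hline x hx hxconv
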